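/- Under the IV assumptions (Independence, Relevance, Monotonicity, Exclusion), the first stage for D∨ satisfies ΔE[D∨|Z] = μ({C1,C2}) + μ({C1,N2}) + μ({N1,C2}). (Lemma 1.4) -/

import Mathlib

open MeasureTheory ProbabilityTheory

noncomputable section

variable {Ω : Type*} [MeasurableSpace Ω]

/-- Observed first-part treatment: `D1 = D1(1)·Z + D1(0)·(1−Z)`. -/
def obsD1 (Z : Ω → ℝ) (D1 : Bool → Ω → ℝ) (ω : Ω) : ℝ :=
  D1 true ω * Z ω + D1 false ω * (1 - Z ω)

/-- Observed second-part treatment. -/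
def obsD2 (Z : Ω → ℝ) (D1 : Bool → Ω → ℝ) (D2 : Bool → Bool → Ω → ℝ) (ω : Ω) : ℝ :=
  (D2 true true ω * obsD1 Z D1 ω + D2 true false ω * (1 - obsD1 Z D1 ω)) * Z ω +
  (D2 false true ω * obsD1 Z D1 ω + D2 false false ω * (1 - obsD1 Z D1 ω)) * (1 - Z ω)

/-- Summary treatment `D∧ = D1·D2`. -/
def obsDand (Z : Ω → ℝ) (D1 : Bool → Ω → ℝ) (D2 : Bool → Bool → Ω → ℝ) (ω : Ω) : ℝ :=
  obsD1 Z D1 ω * obsD2 Z D1 D2 ω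

/-- Summary treatment `D∨ = D1 + D2 − D1·D2`. -/
def obsDor (Z : Ω → ℝ) (D1 : Bool → Ω → ℝ) (D2 : Bool → Bool → Ω → ℝ) (ω : Ω) : ℝ :=
  obsD1 Z D1 ω + obsD2 Z D1 D2 ω - obsD1 Z D1 ω * obsD2 Z D1 D2 ω

/-- Observed outcome `Y = Σ_{d1,d2} Y(Z,d1,d2)·1{D1=d1, D2=d2}`, written out using that the
observed treatments and the instrument are {0,1}-valued. The first index of `Yp` is `z`, the
second is `d1`, the third is `d2`. -/
def obsY (Z : Ω → ℝ) (D1 : Bool → Ω → ℝ) (D2 : Bool → Bool → Ω → ℝ)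
    (Yp : Bool → Bool → Bool → Ω → ℝ) (ω : Ω) : ℝ :=
  (Yp true true true ω * obsD1 Z D1 ω * obsD2 Z D1 D2 ω +
   Yp true false true ω * (1 - obsD1 Z D1 ω) * obsD2 Z D1 D2 ω +
   Yp true true false ω * obsD1 Z D1 ω * (1 - obsD2 Z D1 D2 ω) +
   Yp true false false ω * (1 - obsD1 Z D1 ω) * (1 - obsD2 Z D1 D2 ω)) * Z ω +
  (Yp false true true ω * obsD1 Z D1 ω * obsD2 Z D1 D2 ω +
   Yp false false true ω * (1 - obsD1 Z D1 ω) * obsD2 Z D1 D2 ω +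
   Yp false true false ω * obsD1 Z D1 ω * (1 - obsD2 Z D1 D2 ω) +
   Yp false false false ω * (1 - obsD1 Z D1 ω) * (1 - obsD2 Z D1 D2 ω)) * (1 - Z ω)

/-- `ΔE[A|Z] := E[A | Z = 1] − E[A | Z = 0]`, expectations under conditional measures. -/
def dE (μ : Measure Ω) (Z A : Ω → ℝ) : ℝ :=
  (∫ ω, A ω ∂(μ[|Z ⁻¹' {1}])) - (∫ ω, A ω ∂(μ[|Z ⁻¹' {0}]))

/-- The full-complier event `{C1,C2}`. -/
def CCev (D1 : Bool → Ω → ℝ) (D2 : Bool → Bool → Ω → ℝ) : Set Ω :=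
  {ω | D1 true ω - D1 false ω = 1 ∧ D2 true true ω - D2 false false ω = 1}

/-- The mover event `{C1,N2}`. -/
def CNev (D1 : Bool → Ω → ℝ) (D2 : Bool → Bool → Ω → ℝ) : Set Ω :=
  {ω | D1 true ω - D1 false ω = 1 ∧ D2 true true ω = 0 ∧ D2 false false ω = 0}

/-- The mover event `{C1,A2}`. -/
def CAev (D1 : Bool → Ω → ℝ) (D2 : Bool → Bool → Ω → ℝ) : Set Ω :=
  {ω | D1 true ω - D1 false ω = 1 ∧ D2 true true ω = 1 ∧ D2 false false ω = 1}

/-- The mover event `{N1,C2}`. -/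
def NCev (D1 : Bool → Ω → ℝ) (D2 : Bool → Bool → Ω → ℝ) : Set Ω :=
  {ω | D1 true ω = 0 ∧ D1 false ω = 0 ∧ D2 true false ω - D2 false false ω = 1}

/-- The mover event `{A1,C2}`. -/
def ACev (D1 : Bool → Ω → ℝ) (D2 : Bool → Bool → Ω → ℝ) : Set Ω :=
  {ω | D1 true ω = 1 ∧ D1 false ω = 1 ∧ D2 true true ω - D2 false true ω = 1}

/-!
Consistency and independence turn the first stage of a binary treatment with monotone potential
values `W(0) ≤ W(1)` into `E[W(1) - W(0)]`, which is the mass of its compliers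
`{W(1) - W(0) = 1}`. For `D∨` the potential values are `D1(z) ∨ D2(z, D1(z))`. A complier of `D∨`
has `D1(0) = D2(0,0) = 0`, and either `D1(1) = 1`, so that it lies in `{C1,C2}` or `{C1,N2}`
according to `D2(1,1)`, or `D1(1) = 0` and `D2(1,0) = 1`, so that it lies in `{N1,C2}`.
-/

section Conditioning

variable {μ : Measure Ω}

lemma identDistrib_cond_of_indepFun [IsFiniteMeasure μ] {β γ : Type*} [MeasurableSpace β]
    [MeasurableSpace γ] {X : Ω → β} {Z : Ω → γ} {t : Set γ} (hX : AEMeasurable X μ)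
    (hZ : Measurable Z) (hXZ : IndepFun X Z μ) (ht : MeasurableSet t) (hμt : μ (Z ⁻¹' t) ≠ 0) :
    IdentDistrib X X (μ[|Z ⁻¹' t]) μ := by
  have hX' : AEMeasurable X (μ[|Z ⁻¹' t]) := hX.mono_ac cond_absolutelyContinuous
  refine ⟨hX', hX, Measure.ext fun s hs => ?_⟩
  rw [Measure.map_apply_of_aemeasurable hX' hs, Measure.map_apply_of_aemeasurable hX hs]
  calc μ[X ⁻¹' s | Z ⁻¹' t]
      = (μ (Z ⁻¹' t))⁻¹ * μ (X ⁻¹' s ∩ Z ⁻¹' t) := by rw [cond_apply (hZ ht), Set.inter_comm]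
    _ = (μ (Z ⁻¹' t))⁻¹ * (μ (Z ⁻¹' t) * μ (X ⁻¹' s)) := by
        rw [hXZ.measure_inter_preimage_eq_mul _ _ hs ht, mul_comm (μ (X ⁻¹' s))]
    _ = μ (X ⁻¹' s) := ENNReal.inv_mul_cancel_left' (by simp [hμt]) (by simp)

lemma integral_cond_eq_of_indepFun [IsFiniteMeasure μ] {E γ : Type*} [NormedAddCommGroup E]
    [NormedSpace ℝ E] [MeasurableSpace E] [BorelSpace E] [MeasurableSpace γ] {A W : Ω → E}
    {Z : Ω → γ} {t : Set γ} (hW : AEMeasurable W μ) (hZ : Measurable Z) (hWZ : IndepFun W Z μ)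
    (ht : MeasurableSet t) (hμt : μ (Z ⁻¹' t) ≠ 0) (hAW : Set.EqOn A W (Z ⁻¹' t)) :
    ∫ ω, A ω ∂(μ[|Z ⁻¹' t]) = ∫ ω, W ω ∂μ :=
  (integral_congr_ae (ae_cond_of_forall_mem (hZ ht) hAW)).trans
    (identDistrib_cond_of_indepFun hW hZ hWZ ht hμt).integral_eq

lemma measure_preimage_singleton_ne_zero_of_lt_one [IsProbabilityMeasure μ] {β : Type*}
    {X : Ω → β} {a b : β} (hX : ∀ ω, X ω = a ∨ X ω = b) (hb : μ (X ⁻¹' {b}) < 1) :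
    μ (X ⁻¹' {a}) ≠ 0 := by
  intro ha
  have hcover : X ⁻¹' {a} ∪ X ⁻¹' {b} = Set.univ := Set.eq_univ_of_forall hX
  have hle : μ Set.univ ≤ μ (X ⁻¹' {a}) + μ (X ⁻¹' {b}) := hcover ▸ measure_union_le _ _
  rw [measure_univ, ha, zero_add] at hle
  exact hb.not_ge hle

end Conditioning

section BinaryTreatment

/-- The compliers of a binary treatment with potential values `W true` (instrument on) and
`W false` (instrument off), written with a difference as in the events of the paper. -/
def compliers {α : Type*} (W : Bool → α → ℝ) : Set α :=
  {ω | W true ω - W false ω = 1}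

variable {μ : Measure Ω}

lemma integrable_of_eq_zero_or_one [IsFiniteMeasure μ] {f : Ω → ℝ}
    (hf : AEStronglyMeasurable f μ) (hf01 : ∀ᵐ ω ∂μ, f ω = 0 ∨ f ω = 1) : Integrable f μ := by
  refine Integrable.of_bound hf 1 ?_
  filter_upwards [hf01] with ω hω
  rcases hω with h | h <;> simp [h]

lemma integral_eq_measureReal_of_eq_zero_or_one {f : Ω → ℝ} (hf : Measurable f)
    (hf01 : ∀ᵐ ω ∂μ, f ω = 0 ∨ f ω = 1) : ∫ ω, f ω ∂μ = μ.real {ω | f ω = 1} := by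
  rw [← integral_indicator_one (measurableSet_eq_fun hf measurable_const)]
  refine integral_congr_ae ?_
  filter_upwards [hf01] with ω hω
  rcases hω with h | h <;> simp [h]

lemma integral_sub_integral_eq_measureReal_compliers [IsFiniteMeasure μ] {W : Bool → Ω → ℝ}
    (hW : ∀ z, Measurable (W z)) (hW01 : ∀ z, ∀ᵐ ω ∂μ, W z ω = 0 ∨ W z ω = 1)
    (hmono : W false ≤ᵐ[μ] W true) :
    ∫ ω, W true ω ∂μ - ∫ ω, W false ω ∂μ = μ.real (compliers W) := by
  have hint (z : Bool) : Integrable (W z) μ :=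
    integrable_of_eq_zero_or_one (hW z).aestronglyMeasurable (hW01 z)
  rw [← integral_sub (hint true) (hint false)]
  refine integral_eq_measureReal_of_eq_zero_or_one ((hW true).sub (hW false)) ?_
  filter_upwards [hmono, hW01 true, hW01 false] with ω hω h₁ h₀
  rcases h₀ with h₀ | h₀
  · simpa [h₀] using h₁
  · have h_true : W true ω = 1 := h₁.resolve_left fun h => by linarith
    simp [h_true, h₀]

lemma dE_eq_measureReal_compliers [IsFiniteMeasure μ] {Z A : Ω → ℝ} {W : Bool → Ω → ℝ}
    (hZ : Measurable Z) (hZ0 : μ (Z ⁻¹' {0}) ≠ 0) (hZ1 : μ (Z ⁻¹' {1}) ≠ 0)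
    (hW : ∀ z, Measurable (W z)) (hW01 : ∀ z, ∀ᵐ ω ∂μ, W z ω = 0 ∨ W z ω = 1)
    (hWZ : ∀ z, IndepFun (W z) Z μ) (hmono : W false ≤ᵐ[μ] W true)
    (hA0 : Set.EqOn A (W false) (Z ⁻¹' {0})) (hA1 : Set.EqOn A (W true) (Z ⁻¹' {1})) :
    dE μ Z A = μ.real (compliers W) := by
  rw [dE,
    integral_cond_eq_of_indepFun (hW true).aemeasurable hZ (hWZ true)
      (measurableSet_singleton 1) hZ1 hA1,
    integral_cond_eq_of_indepFun (hW false).aemeasurable hZ (hWZ false)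
      (measurableSet_singleton 0) hZ0 hA0,
    integral_sub_integral_eq_measureReal_compliers hW hW01 hmono]

end BinaryTreatment

section PotentialTreatments

/-- The potential second-part treatment `D2(z, D1(z))`, in which the first part responds to the
instrument as well. -/
def potD2 {α : Type*} (D1 : Bool → α → ℝ) (D2 : Bool → Bool → α → ℝ) (z : Bool) (ω : α) : ℝ :=
  D2 z true ω * D1 z ω + D2 z false ω * (1 - D1 z ω)

/-- The potential value `D∨(z)` of the summary treatment `D∨`: the union of `D1(z)` and
`D2(z, D1(z))`, written as the same polynomial as `obsDor`. -/
def potDor {α : Type*} (D1 : Bool → α → ℝ) (D2 : Bool → Bool → α → ℝ) (z : Bool) (ω : α) : ℝ :=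
  D1 z ω + potD2 D1 D2 z ω - D1 z ω * potD2 D1 D2 z ω

section Pointwise

variable {α : Type*} {Z : α → ℝ} {D1 : Bool → α → ℝ} {D2 : Bool → Bool → α → ℝ} {z : Bool} {ω : α}

lemma potD2_of_D1_eq_zero (h : D1 z ω = 0) : potD2 D1 D2 z ω = D2 z false ω := by
  simp [potD2, h]

lemma potD2_of_D1_eq_one (h : D1 z ω = 1) : potD2 D1 D2 z ω = D2 z true ω := by
  simp [potD2, h]

lemma potDor_of_D1_eq_zero (h : D1 z ω = 0) : potDor D1 D2 z ω = D2 z false ω := by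
  simp [potDor, potD2_of_D1_eq_zero h, h]

lemma potDor_of_D1_eq_one (h : D1 z ω = 1) : potDor D1 D2 z ω = 1 := by
  simp [potDor, h]

lemma potD2_eq_zero_or_one (hD1 : D1 z ω = 0 ∨ D1 z ω = 1)
    (hD2 : ∀ d, D2 z d ω = 0 ∨ D2 z d ω = 1) :
    potD2 D1 D2 z ω = 0 ∨ potD2 D1 D2 z ω = 1 := by
  rcases hD1 with h | h
  · exact potD2_of_D1_eq_zero (D2 := D2) h ▸ hD2 false
  · exact potD2_of_D1_eq_one (D2 := D2) h ▸ hD2 true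

lemma potDor_eq_zero_or_one (hD1 : D1 z ω = 0 ∨ D1 z ω = 1)
    (hD2 : D2 z false ω = 0 ∨ D2 z false ω = 1) :
    potDor D1 D2 z ω = 0 ∨ potDor D1 D2 z ω = 1 := by
  rcases hD1 with h | h
  · exact potDor_of_D1_eq_zero (D2 := D2) h ▸ hD2
  · exact Or.inr (potDor_of_D1_eq_one h)

lemma potDor_le_potDor {z' : Bool} (h1 : D1 z ω ≤ D1 z' ω)
    (h2 : potD2 D1 D2 z ω ≤ potD2 D1 D2 z' ω) (h1_le : D1 z' ω ≤ 1)
    (h2_le : potD2 D1 D2 z ω ≤ 1) : potDor D1 D2 z ω ≤ potDor D1 D2 z' ω := by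
  have hgain : potDor D1 D2 z' ω - potDor D1 D2 z ω =
      (D1 z' ω - D1 z ω) * (1 - potD2 D1 D2 z ω) +
        (potD2 D1 D2 z' ω - potD2 D1 D2 z ω) * (1 - D1 z' ω) := by
    simp only [potDor]
    ring
  rw [← sub_nonneg, hgain]
  exact add_nonneg (mul_nonneg (sub_nonneg.2 h1) (sub_nonneg.2 h2_le))
    (mul_nonneg (sub_nonneg.2 h2) (sub_nonneg.2 h1_le))

lemma obsDor_eqOn_potDor_false : Set.EqOn (obsDor Z D1 D2) (potDor D1 D2 false) (Z ⁻¹' {0}) := by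
  intro ω hω
  have hZω : Z ω = 0 := hω
  simp [obsDor, obsD1, obsD2, potDor, potD2, hZω]

lemma obsDor_eqOn_potDor_true : Set.EqOn (obsDor Z D1 D2) (potDor D1 D2 true) (Z ⁻¹' {1}) := by
  intro ω hω
  have hZω : Z ω = 1 := hω
  simp [obsDor, obsD1, obsD2, potDor, potD2, hZω]

end Pointwise

variable {D1 : Bool → Ω → ℝ} {D2 : Bool → Bool → Ω → ℝ}

lemma measurable_potDor {z : Bool} (hD1 : Measurable (D1 z)) (hD2 : ∀ d, Measurable (D2 z d)) :
    Measurable (potDor D1 D2 z) := by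
  unfold potDor potD2
  fun_prop

lemma potDor_ae_le_potDor {μ : Measure Ω} {z z' : Bool} (hD1 : ∀ z ω, D1 z ω = 0 ∨ D1 z ω = 1)
    (hD2 : ∀ z d ω, D2 z d ω = 0 ∨ D2 z d ω = 1) (h1 : D1 z ≤ᵐ[μ] D1 z')
    (h2 : potD2 D1 D2 z ≤ᵐ[μ] potD2 D1 D2 z') : potDor D1 D2 z ≤ᵐ[μ] potDor D1 D2 z' := by
  have le_one {x : ℝ} (hx : x = 0 ∨ x = 1) : x ≤ 1 := by rcases hx with rfl | rfl <;> norm_num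
  filter_upwards [h1, h2] with ω h1ω h2ω
  exact potDor_le_potDor h1ω h2ω (le_one (hD1 z' ω))
    (le_one (potD2_eq_zero_or_one (hD1 z ω) (hD2 z · ω)))

lemma indepFun_potDor {μ : Measure Ω} {γ : Type*} [MeasurableSpace γ] {X : Ω → γ}
    (h : IndepFun (fun ω => ((fun z => D1 z ω), (fun z d => D2 z d ω))) X μ) (z : Bool) :
    IndepFun (potDor D1 D2 z) X μ :=
  let D1' (z : Bool) (p : (Bool → ℝ) × (Bool → Bool → ℝ)) : ℝ := p.1 z
  let D2' (z d : Bool) (p : (Bool → ℝ) × (Bool → Bool → ℝ)) : ℝ := p.2 z d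
  h.comp (φ := potDor D1' D2' z) (measurable_potDor (by fun_prop) (by fun_prop)) measurable_id

end PotentialTreatments

section ComplierTypes

lemma sub_eq_one_iff_of_eq_zero_or_one {x y : ℝ} (hx : x = 0 ∨ x = 1) (hy : y = 0 ∨ y = 1) :
    x - y = 1 ↔ x = 1 ∧ y = 0 := by
  rcases hx with rfl | rfl <;> rcases hy with rfl | rfl <;> norm_num

section Events

variable {α : Type*} {D1 : Bool → α → ℝ} {D2 : Bool → Bool → α → ℝ}

lemma compliers_potDor (hD1 : ∀ z ω, D1 z ω = 0 ∨ D1 z ω = 1)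
    (hD2 : ∀ z d ω, D2 z d ω = 0 ∨ D2 z d ω = 1) :
    compliers (potDor D1 D2) = CCev D1 D2 ∪ CNev D1 D2 ∪ NCev D1 D2 := by
  ext ω
  simp only [compliers, CCev, CNev, NCev, Set.mem_union, Set.mem_ofPred_eq,
    sub_eq_one_iff_of_eq_zero_or_one (hD1 true ω) (hD1 false ω),
    sub_eq_one_iff_of_eq_zero_or_one (hD2 _ _ ω) (hD2 _ _ ω),
    sub_eq_one_iff_of_eq_zero_or_one (potDor_eq_zero_or_one (hD1 true ω) (hD2 true false ω))
      (potDor_eq_zero_or_one (hD1 false ω) (hD2 false false ω))]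
  rcases hD1 false ω with hD1_false | hD1_false
  · rcases hD1 true ω with hD1_true | hD1_true
    · simp [potDor_of_D1_eq_zero, hD1_false, hD1_true]
    · rcases hD2 true true ω with hD2_true | hD2_true <;>
        simp [potDor_of_D1_eq_zero, potDor_of_D1_eq_one, hD1_false, hD1_true, hD2_true]
  · simp [potDor_of_D1_eq_one, hD1_false]

lemma disjoint_CCev_CNev : Disjoint (CCev D1 D2) (CNev D1 D2) := by
  refine Set.disjoint_left.2 fun ω hCC hCN => ?_
  simp only [CCev, CNev, Set.mem_ofPred_eq] at hCC hCN
  linarith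

lemma disjoint_CCev_union_CNev_NCev : Disjoint (CCev D1 D2 ∪ CNev D1 D2) (NCev D1 D2) := by
  refine Set.disjoint_left.2 fun ω hC hN => ?_
  have hC1 : D1 true ω - D1 false ω = 1 := hC.elim And.left And.left
  linarith [hN.1, hN.2.1]

end Events

variable {D1 : Bool → Ω → ℝ} {D2 : Bool → Bool → Ω → ℝ}

lemma measurableSet_CNev (hD1 : ∀ z, Measurable (D1 z)) (hD2 : ∀ z d, Measurable (D2 z d)) :
    MeasurableSet (CNev D1 D2) := by
  refine (measurableSet_eq_fun ?_ ?_).inter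
    ((measurableSet_eq_fun ?_ ?_).inter (measurableSet_eq_fun ?_ ?_)) <;> fun_prop

lemma measurableSet_NCev (hD1 : ∀ z, Measurable (D1 z)) (hD2 : ∀ z d, Measurable (D2 z d)) :
    MeasurableSet (NCev D1 D2) := by
  refine (measurableSet_eq_fun ?_ ?_).inter
    ((measurableSet_eq_fun ?_ ?_).inter (measurableSet_eq_fun ?_ ?_)) <;> fun_prop

lemma measureReal_compliers_potDor {μ : Measure Ω} [IsFiniteMeasure μ]
    (hD1meas : ∀ z, Measurable (D1 z)) (hD2meas : ∀ z d, Measurable (D2 z d))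
    (hD1 : ∀ z ω, D1 z ω = 0 ∨ D1 z ω = 1) (hD2 : ∀ z d ω, D2 z d ω = 0 ∨ D2 z d ω = 1) :
    μ.real (compliers (potDor D1 D2)) =
      μ.real (CCev D1 D2) + μ.real (CNev D1 D2) + μ.real (NCev D1 D2) := by
  rw [compliers_potDor hD1 hD2,
    measureReal_union disjoint_CCev_union_CNev_NCev (measurableSet_NCev hD1meas hD2meas),
    measureReal_union disjoint_CCev_CNev (measurableSet_CNev hD1meas hD2meas)]

end ComplierTypes

theorem stmt_3_general
    (μ : Measure Ω) [IsFiniteMeasure μ]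
    (Z : Ω → ℝ) (D1 : Bool → Ω → ℝ) (D2 : Bool → Bool → Ω → ℝ)
    (hZmeas : Measurable Z)
    (hD1meas : ∀ b, Measurable (D1 b))
    (hD2meas : ∀ b b', Measurable (D2 b b'))
    (hZ0 : μ (Z ⁻¹' {0}) ≠ 0) (hZ1 : μ (Z ⁻¹' {1}) ≠ 0)
    (hD101 : ∀ b ω, D1 b ω = 0 ∨ D1 b ω = 1)
    (hD201 : ∀ b b' ω, D2 b b' ω = 0 ∨ D2 b b' ω = 1)
    (hindep : ∀ z, IndepFun (potDor D1 D2 z) Z μ)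
    (hmono : potDor D1 D2 false ≤ᵐ[μ] potDor D1 D2 true) :
    dE μ Z (obsDor Z D1 D2) =
      μ.real (CCev D1 D2) + μ.real (CNev D1 D2) + μ.real (NCev D1 D2) := by
  rw [← measureReal_compliers_potDor hD1meas hD2meas hD101 hD201]
  exact dE_eq_measureReal_compliers hZmeas hZ0 hZ1
    (fun z => measurable_potDor (hD1meas z) (hD2meas z))
    (fun z => ae_of_all μ fun ω => potDor_eq_zero_or_one (hD101 z ω) (hD201 z false ω))
    hindep hmono obsDor_eqOn_potDor_false obsDor_eqOn_potDor_true

theorem stmt_3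
    (μ : Measure Ω) [IsProbabilityMeasure μ]
    (Z : Ω → ℝ) (D1 : Bool → Ω → ℝ) (D2 : Bool → Bool → Ω → ℝ)
    (Yp : Bool → Bool → Bool → Ω → ℝ)
    (hZmeas : Measurable Z)
    (hD1meas : ∀ b, Measurable (D1 b))
    (hD2meas : ∀ b b', Measurable (D2 b b'))
    (hYmeas : ∀ z d1 d2, Measurable (Yp z d1 d2))
    (hYint : ∀ z d1 d2, Integrable (Yp z d1 d2) μ)
    (hZ01 : ∀ ω, Z ω = 0 ∨ Z ω = 1)
    (hZpos : 0 < μ (Z ⁻¹' {1})) (hZlt : μ (Z ⁻¹' {1}) < 1)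
    (hD101 : ∀ b ω, D1 b ω = 0 ∨ D1 b ω = 1)
    (hD201 : ∀ b b' ω, D2 b b' ω = 0 ∨ D2 b b' ω = 1)
    (hindep : IndepFun
      (fun ω => ((fun b => D1 b ω), (fun b b' => D2 b b' ω), (fun z d1 d2 => Yp z d1 d2 ω))) Z μ)
    (hrel1 : 0 < dE μ Z (obsD1 Z D1))
    (hrel2 : 0 < dE μ Z (obsD2 Z D1 D2))
    (hrelAnd : 0 < dE μ Z (obsDand Z D1 D2))
    (hrelOr : 0 < dE μ Z (obsDor Z D1 D2))
    (hmono1 : ∀ᵐ ω ∂μ, D1 false ω ≤ D1 true ω)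
    (hmono2 : ∀ᵐ ω ∂μ,
      D2 false true ω * D1 false ω + D2 false false ω * (1 - D1 false ω) ≤
        D2 true true ω * D1 true ω + D2 true false ω * (1 - D1 true ω))
    (hexcl : ∀ d1 d2, ∀ᵐ ω ∂μ, Yp true d1 d2 ω = Yp false d1 d2 ω) :
    dE μ Z (obsDor Z D1 D2) =
      (μ (CCev D1 D2)).toReal + (μ (CNev D1 D2)).toReal + (μ (NCev D1 D2)).toReal :=
  stmt_3_general μ Z D1 D2 hZmeas hD1meas hD2meas
    (measure_preimage_singleton_ne_zero_of_lt_one hZ01 hZlt) hZpos.ne' hD101 hD201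
    (indepFun_potDor (hindep.comp (φ := fun p => (p.1, p.2.1)) (by fun_prop) measurable_id))
    (potDor_ae_le_potDor hD101 hD201 hmono1 hmono2)
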